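/- Let P ⊆ ℝ^d be a d-dimensional simplicial reflexive polytope, F a facet of P, v ∈ 𝒱(F), and let F' = N(F,v) be the neighboring facet. Then ⟨u_{F'}, v⟩ ≤ 0, and for every point x ∈ ℝ^d one has ⟨u_{F'}, x⟩ = ⟨u_F, x⟩ + (⟨u_{F'}, v⟩ − 1)·⟨u_F^v, x⟩. -/

import Mathlib

noncomputable section

/-- The standard inner product on `ℝ^d`. -/
def dotp {d : ℕ} (x y : Fin d → ℝ) : ℝ := ∑ i, x i * y i

/-- `x` is a point of the lattice `ℤ^d`. -/
def IsLP {d : ℕ} (x : Fin d → ℝ) : Prop := ∀ i, ∃ n : ℤ, x i = (n : ℝ)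

/-- A lattice polytope: convex hull of finitely many lattice points. -/
def IsLatticePolytope {d : ℕ} (P : Set (Fin d → ℝ)) : Prop :=
  ∃ V : Finset (Fin d → ℝ), (∀ v ∈ V, IsLP v) ∧ P = convexHull ℝ (V : Set (Fin d → ℝ))

/-- The dual polytope `P* = {x | ⟨x,y⟩ ≤ 1 ∀ y ∈ P}`. -/
def dualPolytope {d : ℕ} (P : Set (Fin d → ℝ)) : Set (Fin d → ℝ) :=
  {x | ∀ y ∈ P, dotp x y ≤ 1}

/-- `P` is a reflexive polytope: a (`d`-dimensional) lattice polytope with `0` in its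
interior whose dual is again a lattice polytope. -/
def IsReflexive {d : ℕ} (P : Set (Fin d → ℝ)) : Prop :=
  IsLatticePolytope P ∧ (0 : Fin d → ℝ) ∈ interior P ∧ IsLatticePolytope (dualPolytope P)

/-- `F` is a facet of `P` with (uniquely determined) outer normal `u`, normalized by
`⟨u, F⟩ = 1` (possible since `0` is in the interior of `P`). -/
def IsFacetNormal {d : ℕ} (P F : Set (Fin d → ℝ)) (u : Fin d → ℝ) : Prop :=
  F.Nonempty ∧ (∀ y ∈ P, dotp u y ≤ 1) ∧ F = {y ∈ P | dotp u y = 1} ∧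
    Module.finrank ℝ (vectorSpan ℝ F) = d - 1

/-- `F` is a facet of `P`. -/
def IsFacet {d : ℕ} (P F : Set (Fin d → ℝ)) : Prop := ∃ u, IsFacetNormal P F u

/-- `P` is simplicial: every facet has exactly `d` vertices. -/
def IsSimplicial {d : ℕ} (P : Set (Fin d → ℝ)) : Prop :=
  ∀ F, IsFacet P F → (Set.extremePoints ℝ F).ncard = d


theorem dotp_add_right {d : ℕ} (x y z : Fin d → ℝ) : dotp x (y + z) = dotp x y + dotp x z := by
  simp [dotp, mul_add, Finset.sum_add_distrib]

theorem dotp_smul_right {d : ℕ} (x y : Fin d → ℝ) (a : ℝ) : dotp x (a • y) = a * dotp x y := by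
  simp only [dotp, Pi.smul_apply, smul_eq_mul, Finset.mul_sum]
  exact Finset.sum_congr rfl fun i _ => by ring

theorem dotp_add_left {d : ℕ} (x y z : Fin d → ℝ) : dotp (x + y) z = dotp x z + dotp y z := by
  simp [dotp, add_mul, Finset.sum_add_distrib]

theorem dotp_sub_left {d : ℕ} (x y z : Fin d → ℝ) : dotp (x - y) z = dotp x z - dotp y z := by
  simp [dotp, sub_mul, Finset.sum_sub_distrib]

theorem dotp_smul_left {d : ℕ} (x y : Fin d → ℝ) (a : ℝ) : dotp (a • x) y = a * dotp x y := by
  simp only [dotp, Pi.smul_apply, smul_eq_mul, Finset.mul_sum]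
  exact Finset.sum_congr rfl fun i _ => by ring

/-- Pairing with a fixed vector, as a linear map. -/
def dotL {d : ℕ} (x : Fin d → ℝ) : (Fin d → ℝ) →ₗ[ℝ] ℝ where
  toFun := dotp x
  map_add' := dotp_add_right x
  map_smul' a y := dotp_smul_right x y a

theorem dotL_apply {d : ℕ} (x y : Fin d → ℝ) : dotL x y = dotp x y := rfl

theorem dotp_continuous {d : ℕ} (x : Fin d → ℝ) : Continuous (dotp x) := by
  unfold dotp; fun_prop

theorem dotp_ext {d : ℕ} {x y : Fin d → ℝ} (h : ∀ z, dotp x z = dotp y z) : x = y := by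
  funext i
  simpa [dotp, Pi.single_apply] using h (Pi.single i 1)

/-- A facet spans the whole space. -/
theorem facet_span {d : ℕ} {P F : Set (Fin d → ℝ)} {u : Fin d → ℝ} (hF : IsFacetNormal P F u) :
    Submodule.span ℝ F = ⊤ := by
  obtain ⟨⟨f, hf⟩, -, hFe, hr⟩ := hF
  have h1 : ∀ y ∈ F, dotp u y = 1 := fun y hy => by rw [hFe] at hy; exact hy.2
  have hle : vectorSpan ℝ F ≤ Submodule.span ℝ F := by
    rw [vectorSpan_def, Submodule.span_le]
    rintro _ ⟨a, ha, b, hb, rfl⟩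
    exact Submodule.sub_mem _ (Submodule.subset_span ha) (Submodule.subset_span hb)
  have hker : vectorSpan ℝ F ≤ LinearMap.ker (dotL u) := by
    rw [vectorSpan_def, Submodule.span_le]
    rintro _ ⟨a, ha, b, hb, rfl⟩
    change dotL u (a - b) = 0
    rw [map_sub, dotL_apply, dotL_apply, h1 a ha, h1 b hb, sub_self]
  have hlt : vectorSpan ℝ F < Submodule.span ℝ F := by
    refine lt_of_le_of_ne hle fun he => ?_
    have : f ∈ vectorSpan ℝ F := he ▸ Submodule.subset_span hf
    have h0 := hker this
    rw [LinearMap.mem_ker, dotL_apply, h1 f hf] at h0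
    exact one_ne_zero h0
  have h2 := Submodule.finrank_lt_finrank_of_lt hlt
  have h3 := Submodule.finrank_le (Submodule.span ℝ F)
  apply Submodule.eq_top_of_finrank_eq
  simp only [Module.finrank_fin_fun] at h3 ⊢
  omega

theorem facet_ext {d : ℕ} {P F : Set (Fin d → ℝ)} {u x y : Fin d → ℝ}
    (hF : IsFacetNormal P F u) (h : ∀ z ∈ F, dotp x z = dotp y z) : x = y := by
  have : dotL x = dotL y := LinearMap.ext_on (facet_span hF) h
  exact dotp_ext fun z => LinearMap.congr_fun this z

theorem facet_isExtreme {d : ℕ} {P F : Set (Fin d → ℝ)} {u : Fin d → ℝ}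
    (hF : IsFacetNormal P F u) : IsExtreme ℝ P F := by
  obtain ⟨-, hle, rfl, -⟩ := hF
  refine ⟨fun y hy => hy.1, ?_⟩
  rintro a ha b hb c ⟨-, hc⟩ ⟨s, t, hs, ht, hst, rfl⟩
  rw [dotp_add_right, dotp_smul_right, dotp_smul_right] at hc
  refine ⟨ha, ?_⟩
  have := hle a ha
  have := hle b hb
  nlinarith

theorem facet_normal_extreme {d : ℕ} {P F : Set (Fin d → ℝ)} {u : Fin d → ℝ}
    (hF : IsFacetNormal P F u) : u ∈ Set.extremePoints ℝ (dualPolytope P) := by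
  refine ⟨hF.2.1, ?_⟩
  rintro a ha b hb ⟨s, t, hs, ht, hst, he⟩
  refine facet_ext hF fun z hz => ?_
  rw [hF.2.2.1] at hz
  have h1 := ha z hz.1
  have h2 := hb z hz.1
  have h3 := hz.2
  rw [h3]
  rw [← he, dotp_add_left, dotp_smul_left, dotp_smul_left] at h3
  nlinarith

theorem lattice_extreme {d : ℕ} {P : Set (Fin d → ℝ)} (hP : IsLatticePolytope P)
    {x : Fin d → ℝ} (hx : x ∈ Set.extremePoints ℝ P) : IsLP x := by
  obtain ⟨V, hV, rfl⟩ := hP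
  exact hV x (extremePoints_convexHull_subset hx)

theorem lattice_dotp {d : ℕ} {x y : Fin d → ℝ} (hx : IsLP x) (hy : IsLP y) :
    ∃ n : ℤ, dotp x y = n := by
  choose a ha using hx
  choose b hb using hy
  exact ⟨∑ i, a i * b i, by simp [dotp, ha, hb]⟩

/-- Vectors that agree on the vertices of a facet agree. -/
theorem facet_vertices_ext {d : ℕ} {P F : Set (Fin d → ℝ)} {u x y : Fin d → ℝ}
    (hP : IsLatticePolytope P) (hF : IsFacetNormal P F u)
    (h : ∀ z ∈ Set.extremePoints ℝ F, dotp x z = dotp y z) : x = y := by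
  obtain ⟨V, -, rfl⟩ := hP
  have hc : IsCompact (convexHull ℝ (V : Set (Fin d → ℝ))) := V.finite_toSet.isCompact_convexHull ℝ
  have hFe : F = convexHull ℝ (V : Set (Fin d → ℝ)) ∩ {y | dotp u y = 1} := hF.2.2.1
  have hFc : IsCompact F := by
    rw [hFe]
    exact hc.inter_right (isClosed_eq (dotp_continuous u) continuous_const)
  have hFconv : Convex ℝ F := by
    rw [hFe]
    exact (convex_convexHull ℝ _).inter (convex_hyperplane (dotL u).isLinear 1)
  have hKM := closure_convexHull_extremePoints hFc hFconv
  refine facet_ext hF fun z hz => ?_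
  rw [← hKM] at hz
  have hsub : closure (convexHull ℝ (Set.extremePoints ℝ F)) ⊆ {z | dotp x z = dotp y z} := by
    refine closure_minimal (convexHull_min h ?_)
      (isClosed_eq (dotp_continuous x) (dotp_continuous y))
    intro a ha b hb s t _ _ _
    simp only [Set.mem_setOf_eq] at ha hb ⊢
    simp only [dotp_add_right, dotp_smul_right, ha, hb]
  exact hsub hz

/-- for a facet `F` of a simplicial reflexive polytope, a vertex `v` of `F`
and the neighboring facet `F' = N(F,v)`: `⟨u_{F'}, v⟩ ≤ 0` and
`⟨u_{F'}, x⟩ = ⟨u_F, x⟩ + (⟨u_{F'}, v⟩ - 1)·⟨u_F^v, x⟩` for all `x`. -/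
theorem stmt7 {d : ℕ} (P : Set (Fin d → ℝ)) (hP : IsReflexive P) (hs : IsSimplicial P)
    (F F' : Set (Fin d → ℝ)) (u u' : Fin d → ℝ)
    (hF : IsFacetNormal P F u) (hF' : IsFacetNormal P F' u')
    (v : Fin d → ℝ) (hv : v ∈ Set.extremePoints ℝ F)
    (hne : F' ≠ F) (hsub : Set.extremePoints ℝ F \ {v} ⊆ F')
    (uv : Fin d → ℝ) (huv1 : dotp uv v = 1)
    (huv0 : ∀ w ∈ Set.extremePoints ℝ F, w ≠ v → dotp uv w = 0) :
    dotp u' v ≤ 0 ∧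
      ∀ x : Fin d → ℝ, dotp u' x = dotp u x + (dotp u' v - 1) * dotp uv x := by
  have key : u' = u + (dotp u' v - 1) • uv := by
    refine facet_vertices_ext hP.1 hF fun w hw => ?_
    have hw1 : dotp u w = 1 := by
      have := hw.1
      rw [hF.2.2.1] at this
      exact this.2
    rw [dotp_add_left, dotp_smul_left, hw1]
    by_cases hwv : w = v
    · subst hwv
      rw [huv1]; ring
    · have h2 : w ∈ F' := hsub ⟨hw, hwv⟩
      rw [hF'.2.2.1] at h2
      rw [huv0 w hw hwv, h2.2]; ring
  refine ⟨?_, fun x => ?_⟩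
  · have hvP : v ∈ Set.extremePoints ℝ P := (facet_isExtreme hF).extremePoints_subset_extremePoints hv
    obtain ⟨n, hn⟩ := lattice_dotp (lattice_extreme hP.2.2 (facet_normal_extreme hF'))
      (lattice_extreme hP.1 hvP)
    have hle : dotp u' v ≤ 1 := hF'.2.1 v hvP.1
    have hne1 : dotp u' v ≠ 1 := by
      intro h
      rw [h, sub_self, zero_smul, add_zero] at key
      apply hne
      rw [hF'.2.2.1, hF.2.2.1, key]
    rw [hn] at hle hne1 ⊢
    norm_cast at hle hne1 ⊢
    omega
  · conv_lhs => rw [key]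
    rw [dotp_add_left, dotp_smul_left]
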